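/- arXiv:cs/0111056 — 3 statements merged into one kernel-verified Lean document; each statement's English description precedes it below -/
import Mathlib

section
/- The Vernam one-time pad provides perfect secrecy: let n ≥ 1, let P = C = K = {0,1}^n (length-n bit strings, i.e., functions Fin n → ZMod 2), let the encryption functions be E_k(p) = p ⊕ k (componentwise addition modulo 2), let Pr_K be the uniform distribution on K, and let Pr_P be an arbitrary probability distribution on P. Then for all p ∈ P and c ∈ C, Pr(p,c) = Pr_P(p)·Pr(c), i.e., the system provides perfect secrecy. -/
/-- The Vernam one-time pad provides perfect secrecy. -/
theorem vernam_perfect_secrecy (n : ℕ) (hn : 1 ≤ n)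
    (PrP : (Fin n → ZMod 2) → ℝ)
    (hPnonneg : ∀ p : Fin n → ZMod 2, 0 ≤ PrP p)
    (hPsum : ∑ p : Fin n → ZMod 2, PrP p = 1)
    (PrK : (Fin n → ZMod 2) → ℝ)
    (hKuniform : ∀ k : Fin n → ZMod 2,
      PrK k = 1 / (Fintype.card (Fin n → ZMod 2) : ℝ)) :
    ∀ (p c : Fin n → ZMod 2),
      (∑ k : Fin n → ZMod 2, if p + k = c then PrP p * PrK k else 0)
        = PrP p *
          (∑ p' : Fin n → ZMod 2, ∑ k : Fin n → ZMod 2,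
            if p' + k = c then PrP p' * PrK k else 0) := by
  intro p c
  -- For each plaintext `q`, exactly one key, `k = c - q`, encrypts `q` to `c`.
  have joint (q : Fin n → ZMod 2) :
      (∑ k : Fin n → ZMod 2, if q + k = c then PrP q * PrK k else 0)
        = PrP q * (1 / (Fintype.card (Fin n → ZMod 2) : ℝ)) := by
    have key (k : Fin n → ZMod 2) : q + k = c ↔ k = c - q := eq_sub_iff_add_eq'.symm
    simp only [key, hKuniform, Finset.sum_ite_eq', Finset.mem_univ, if_true]
  simp only [joint]
  rw [← Finset.sum_mul, hPsum, one_mul]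
end

section
/- Wiener's approximation inequality: let p and q be primes with q < p < 2q, let n = p·q and φ(n) = (p−1)·(q−1). Let e, d, k be positive integers with e·d = 1 + k·φ(n) and e < φ(n), and suppose d is small in the sense that (3·d : ℝ) < n^{1/4} (equivalently, 81·d⁴ < n). Then k < d, and the fraction k/d approximates e/n so well that |e/n − k/d| < 1/(2·d²) as real numbers. -/
/-!
Since `k φ < e d < φ d`, we get `k < d`. With `s = n - φ = p + q - 1` the key equation reads
`k n - e d = k s - 1`, so the claimed inequality amounts to `2 d (k s - 1) < n`. Here `s < 3 q` and
`k < d` bound the left side by `6 d² q`, while `(9 d²)² < n` and `q² < n` give `9 d² q < n`.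
-/

/-- Wiener's approximation inequality: if the RSA private exponent `d` is
small (`81 * d⁴ < n`), then `k < d` and `k/d` approximates `e/n` within
`1/(2d²)`. -/
theorem wiener_attack (p q : ℕ) (hp : p.Prime) (hq : q.Prime)
    (hqp : q < p) (hp2q : p < 2 * q)
    (n : ℕ) (hn : n = p * q) (φ : ℕ) (hφ : φ = (p - 1) * (q - 1))
    (e d k : ℕ) (he : 0 < e) (hd : 0 < d) (hk : 0 < k)
    (hed : e * d = 1 + k * φ) (heφ : e < φ)
    (hsmall : 81 * d ^ 4 < n) :
    k < d ∧ |(e : ℝ) / (n : ℝ) - (k : ℝ) / (d : ℝ)| < 1 / (2 * (d : ℝ) ^ 2) := by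
  have hkd : k < d := by
    have h1 : e * d < φ * d := Nat.mul_lt_mul_of_pos_right heφ hd
    have h2 : φ * k < φ * d := by linarith [mul_comm k φ]
    exact lt_of_mul_lt_mul_left h2 (Nat.zero_le _)
  refine ⟨hkd, ?_⟩
  have hq1 : 1 < q := hq.one_lt
  have hqn : q ^ 2 < n := by rw [hn]; nlinarith
  have hdq : 9 * d ^ 2 * q < n := by
    refine lt_of_pow_lt_pow_left₀ 2 (Nat.zero_le _) ?_
    calc (9 * d ^ 2 * q) ^ 2 = 81 * d ^ 4 * q ^ 2 := by ring
      _ < n * n := Nat.mul_lt_mul'' hsmall hqn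
      _ = n ^ 2 := by ring
  obtain ⟨s, hs⟩ : ∃ s, p + q = s + 1 := ⟨p + q - 1, by omega⟩
  have hns : n = φ + s := by
    obtain ⟨a, rfl⟩ : ∃ a, p = a + 1 := ⟨p - 1, by omega⟩
    obtain ⟨b, rfl⟩ : ∃ b, q = b + 1 := ⟨q - 1, by omega⟩
    simp only [Nat.add_sub_cancel] at hφ
    rw [hn, hφ]
    have : s = a + b + 1 := by omega
    rw [this]; ring
  have hs3 : s ≤ 3 * q := by omega
  have hbound : 2 * d * (k * s) < n := by
    have : k * s ≤ d * (3 * q) := Nat.mul_le_mul hkd.le hs3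
    nlinarith [Nat.mul_le_mul_left (2 * d) this, Nat.zero_le (d ^ 2 * q)]
  have hs1 : 1 ≤ k * s := Nat.mul_pos hk (by omega)
  have hdR : (0 : ℝ) < d := by exact_mod_cast hd
  have hnR : (0 : ℝ) < n := by exact_mod_cast (by omega : 0 < n)
  have hedR : (e : ℝ) * d = 1 + k * φ := by exact_mod_cast hed
  have hnsR : (n : ℝ) = φ + s := by exact_mod_cast hns
  have hbR : 2 * (d : ℝ) * (k * s) < n := by exact_mod_cast hbound
  have hs1R : (1 : ℝ) ≤ k * s := by exact_mod_cast hs1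
  have hdiff : (e : ℝ) / n - k / d = -((k * s - 1) / (n * d)) := by
    rw [div_sub_div _ _ hnR.ne' hdR.ne', ← neg_div]
    congr 1
    rw [hedR, hnsR]; ring
  rw [hdiff, abs_neg, abs_of_nonneg (div_nonneg (by linarith) (by positivity)),
    div_lt_div_iff₀ (by positivity) (by positivity)]
  nlinarith [mul_lt_mul_of_pos_right hbR hdR, mul_pos hdR hdR]
end

section
/- Soundness of the Goldreich–Micali–Wigderson protocol for graph non-isomorphism: let n be a positive natural number and let G₁ and G₂ be isomorphic simple graphs on the vertex set Fin n. Then for every function f from simple graphs on Fin n to {1, 2} (a prover's answering strategy), the number of pairs (π, b), where π is a permutation of Fin n and b ∈ {1, 2}, such that f(π·G_b) = b is exactly n! (the number of permutations of Fin n); i.e., when π and b are chosen uniformly at random, any prover answers correctly with probability exactly 1/2. -/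
/-!
If `G₂ = σ · G₁`, both challenges are uniformly random relabelings of `G₁`: the challenge `π · G_b`
equals `ρ · G₁` with `ρ = π` for the first bit and `ρ = π * σ` for the second. The bit of a winning
pair is recovered from `ρ` as `f (ρ · G₁)`, and then `π` is recovered by cancelling `σ` if needed.
Hence `(π, b) ↦ ρ` is a bijection from the winning pairs onto all permutations.
-/

/-- The image of a simple graph `G` on `Fin n` under a permutation `π`. -/
def permGraph {n : ℕ} (π : Equiv.Perm (Fin n)) (G : SimpleGraph (Fin n)) :
    SimpleGraph (Fin n) :=
  G.map π.toEmbedding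

theorem permGraph_one {n : ℕ} (G : SimpleGraph (Fin n)) : permGraph 1 G = G :=
  SimpleGraph.map_id G

theorem permGraph_permGraph {n : ℕ} (π σ : Equiv.Perm (Fin n)) (G : SimpleGraph (Fin n)) :
    permGraph π (permGraph σ G) = permGraph (π * σ) G :=
  SimpleGraph.map_map _ _ _

/-- Soundness of the Goldreich–Micali–Wigderson protocol for graph
non-isomorphism: if `G₁` and `G₂` are isomorphic, then for every prover
strategy `f`, out of all `2 * n!` pairs `(π, b)` of a permutation `π` and a
bit `b`, exactly `n!` lead to the correct answer `f (π • G_b) = b`; i.e.,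
the prover answers correctly with probability exactly `1/2`. -/
theorem gmw_non_isomorphism_soundness (n : ℕ) (hn : 0 < n)
    (G₁ G₂ : SimpleGraph (Fin n))
    (hiso : ∃ σ : Equiv.Perm (Fin n), permGraph σ G₁ = G₂) :
    ∀ f : SimpleGraph (Fin n) → Fin 2,
      Nat.card {x : Equiv.Perm (Fin n) × Fin 2 //
          f (permGraph x.1 (![G₁, G₂] x.2)) = x.2}
        = Nat.factorial n := by
  intro f
  obtain ⟨σ, rfl⟩ := hiso
  set g : Fin 2 → Equiv.Perm (Fin n) := ![1, σ] with hg
  have hG : ∀ b, (![G₁, permGraph σ G₁] : Fin 2 → _) b = permGraph (g b) G₁ := by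
    intro b
    fin_cases b
    · simp [hg, permGraph_one]
    · simp [hg]
  simp only [hG, permGraph_permGraph]
  -- A winning pair `(π, b)` is determined by `ρ = π * g b`, since `b = f (ρ · G₁)`.
  let e : {x : Equiv.Perm (Fin n) × Fin 2 // f (permGraph (x.1 * g x.2) G₁) = x.2} ≃
      Equiv.Perm (Fin n) :=
    { toFun := fun x => x.1.1 * g x.1.2
      invFun := fun ρ => ⟨(ρ * (g (f (permGraph ρ G₁)))⁻¹, f (permGraph ρ G₁)), by simp⟩
      left_inv := by
        rintro ⟨⟨π, b⟩, h⟩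
        dsimp only at h
        simp [h]
      right_inv := fun ρ => by simp }
  rw [Nat.card_congr e, Nat.card_perm, Nat.card_fin]
end
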